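/- arXiv:1408.0632 — 2 statements merged into one kernel-verified Lean document; each statement's English description precedes it below -/
import Mathlib

section
/- Define L₁(x,y) = J₁(x,y)·J₁(y,x) − (∂J₁/∂y)(x,y)·(∫_x^y J₁(u,x) du − (1/2)·sign(y − x)), where ∂J₁/∂y denotes the derivative of J₁ in its second variable. Then for each x ∈ ℝ there is C > 0 such that |L₁(x,y)| ≤ C·(|y|^{−3/2} + |y|^{−1/4}) and |L₁(y,x)| ≤ C·(|y|^{−3/2} + |y|^{−1/4}) for all y with |y| ≥ |x| + 1. -/
open MeasureTheory Filter Set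

noncomputable section

/-- The Airy function `Ai(x) = (1/π)·lim_{b→∞} ∫_0^b cos(t³/3 + x·t) dt`. -/
def Ai (x : ℝ) : ℝ :=
  (1 / Real.pi) *
    limUnder Filter.atTop (fun b : ℝ => ∫ t in (0:ℝ)..b, Real.cos (t ^ 3 / 3 + x * t))

/-- The Airy kernel. -/
def KAi (x y : ℝ) : ℝ :=
  if x = y then (deriv Ai x) ^ 2 - x * (Ai x) ^ 2
  else (Ai x * deriv Ai y - deriv Ai x * Ai y) / (x - y)

/-- One-point correlation function of the Airy₂ random point field. -/
def rho (x : ℝ) : ℝ := (deriv Ai x) ^ 2 - x * (Ai x) ^ 2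

/-- Probabilists' Hermite polynomial `Ĥ_m(x) = (−1)^m e^{x²/2} (d/dx)^m e^{−x²/2}`. -/
def hermiteP (m : ℕ) (x : ℝ) : ℝ :=
  (-1 : ℝ) ^ m * Real.exp (x ^ 2 / 2) * iteratedDeriv m (fun t => Real.exp (-t ^ 2 / 2)) x

/-- Normalized oscillator function `φ_m`. -/
def osc (m : ℕ) (x : ℝ) : ℝ :=
  (2 * Real.pi) ^ (-(1:ℝ)/4) * ((m.factorial : ℝ)) ^ (-(1:ℝ)/2) *
    Real.exp (-x ^ 2 / 4) * hermiteP m x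

/-- `ψ_mⁿ(x) = n^{1/12}·φ_m(2√n + n^{−1/6}·x)`. -/
def psiUp (n m : ℕ) (x : ℝ) : ℝ :=
  (n : ℝ) ^ ((1:ℝ)/12) * osc m (2 * Real.sqrt n + (n : ℝ) ^ (-(1:ℝ)/6) * x)

/-- `ψ_n = ψ_nⁿ`. -/
def psiN (n : ℕ) : ℝ → ℝ := psiUp n n

/-- The finite-`n` Airy kernel. -/
def KAiN (n : ℕ) (x y : ℝ) : ℝ :=
  if x = y then
    (deriv (psiN n) x) ^ 2 - psiN n x * deriv (deriv (psiN n)) x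
      - (1 / (2 * (n : ℝ) ^ ((1:ℝ)/3))) * (psiN n x) ^ 2
  else
    (psiN n x * deriv (psiN n) y - deriv (psiN n) x * psiN n y) / (x - y)
      - (1 / (2 * (n : ℝ) ^ ((1:ℝ)/3))) * (psiN n x * psiN n y)

/-- `(εf)(x) = (1/2)·∫_ℝ sign(x − y)·f(y) dy`. -/
def epsF (f : ℝ → ℝ) (x : ℝ) : ℝ := (1/2) * ∫ y : ℝ, Real.sign (x - y) * f y

/-- `εψ_n`. -/
def epsPsi (n : ℕ) : ℝ → ℝ := epsF (psiN n)

/-- `J₁(x,y) = K_Ai(x,y) + (1/2)·Ai(x)·(1 − ∫_y^∞ Ai(u) du)`. -/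
def J1 (x y : ℝ) : ℝ := KAi x y + (1/2) * Ai x * (1 - ∫ u in Set.Ioi y, Ai u)

/-- Scalar part of the quaternion product of Airy₁ kernels. -/
def L1 (x y : ℝ) : ℝ :=
  J1 x y * J1 y x -
    deriv (fun v => J1 x v) y * ((∫ u in x..y, J1 u x) - (1/2) * Real.sign (y - x))

/-- `J₁ⁿ(x,y) = K_Aiⁿ(x,y) + (1/2)·ψ_{n−1}ⁿ(x)·(εψ_n)(y)`. -/
def J1N (n : ℕ) (x y : ℝ) : ℝ :=
  KAiN n x y + (1/2) * psiUp n (n - 1) x * epsPsi n y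

/-- Scalar part of the quaternion product of finite-`n` Airy₁ kernels. -/
def L1N (n : ℕ) (x y : ℝ) : ℝ :=
  J1N n x y * J1N n y x -
    deriv (fun v => J1N n x v) y * ((∫ u in x..y, J1N n u x) - (1/2) * Real.sign (y - x))

/-- `ρ̂(x) = (1/π)·√(−x)` for `x < 0`, and `0` otherwise. -/
def rhoHat (x : ℝ) : ℝ := if x < 0 then Real.sqrt (-x) / Real.pi else 0

/-- `ρ̂ⁿ(x) = (1/π)·√(−x·(1 + x/(4·n^{2/3})))` on `(−4n^{2/3}, 0)`, and `0` otherwise. -/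
def rhoHatN (n : ℕ) (x : ℝ) : ℝ :=
  if -(4 * (n : ℝ) ^ ((2:ℝ)/3)) < x ∧ x < 0 then
    Real.sqrt (-x * (1 + x / (4 * (n : ℝ) ^ ((2:ℝ)/3)))) / Real.pi
  else 0

/-- `G_{a,b,c}(x,y) = |x|^{−a}·|y|^{−b}·|x−y|^{−c}`. -/
def Gf (a b c : ℝ) (x y : ℝ) : ℝ := |x| ^ (-a) * |y| ^ (-b) * |x - y| ^ (-c)

/-- `Ĝ_{a,b,c}(x,y) = G_{a,b,c}(x,y) + G_{a,b,c}(y,x)`. -/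
def Ghat (a b c : ℝ) (x y : ℝ) : ℝ := Gf a b c x y + Gf a b c y x

/-- Soft-edge one-point correlation function of the `n`-point GUE ensemble. -/
def rhoN (n : ℕ) (x : ℝ) : ℝ :=
  (deriv (psiN n) x) ^ 2 - (x ^ 2 / (4 * (n : ℝ) ^ ((2:ℝ)/3)) + x) * (psiN n x) ^ 2

end

/-!
Moving the defining integral of `Ai` to the half-line `i + [0, ∞)` makes it absolutely convergent,
which gives smoothness, the Airy equation `Ai'' = x Ai`, and `Ai(x), Ai'(x) = O(e⁻ˣ)`. At `-∞` the
energy `√(-y) Ai(y)² + Ai'(y)² / √(-y)` is bounded, up to a correction that makes its derivative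
integrable, so `Ai(y) = O(|y|^{-1/4})` and `Ai'(y) = O(|y|^{1/4})`; moreover `Ai = Ai'' / y` shows
that the tail integral of `Ai` stays bounded.

For fixed `x` the factors `J₁(x, y)`, `J₁(y, x)` and `∂J₁` of `L₁` are then controlled far from the
diagonal: in the kernel `K_Ai` and its derivative every term containing `Ai'(y)` or `y Ai(y)` comes
with a factor `1 / (x - y)`, which absorbs the growth. The bracket multiplying `∂J₁` is bounded
because `K_Ai(u, a) = ∫ Ai(u + s) Ai(a + s) ds` over `s > 0` turns the integral of `J₁` into the
pairing of a translate of `Ai` with a translate of its tail integral `T`. Exchanging the two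
points changes this pairing `P` by a product of tails, `P(a, b) + P(b, a) = T(a) T(b)`, so its
boundedness in one variable yields boundedness in the other.
-/

open Asymptotics
open scoped Topology

/-! ### Solutions of the Airy equation -/

/-- Real solutions of the Airy equation `f'' = x f`. -/
structure IsAirySolution (f : ℝ → ℝ) : Prop where
  differentiable : Differentiable ℝ f
  hasDerivAt_deriv (x : ℝ) : HasDerivAt (deriv f) (x * f x) x

/-- The quantity `√(-y) f(y)² + f'(y)² / √(-y)` at `y = -s²`, which controls the oscillations of a
solution `f` of the Airy equation. The substitution keeps all coefficients rational in `s`. -/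
noncomputable def airyEnergy (f : ℝ → ℝ) (s : ℝ) : ℝ :=
  s * f (-s ^ 2) ^ 2 + deriv f (-s ^ 2) ^ 2 / s

/-- The energy without the main part of its variation. As the `s`-derivative of `airyEnergy f` is
`(2s³)⁻¹` times that of `f(-s²) f'(-s²)`, subtracting `f f' / (2s³)` leaves a derivative which,
relative to the energy, is integrable at infinity. -/
noncomputable def correctedAiryEnergy (f : ℝ → ℝ) (s : ℝ) : ℝ :=
  airyEnergy f s - f (-s ^ 2) * deriv f (-s ^ 2) / (2 * s ^ 3)

lemma abs_mul_le_weighted_sq_add_sq {s : ℝ} (hs : 0 < s) (a b : ℝ) :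
    |a * b| ≤ (s * a ^ 2 + b ^ 2 / s) / 2 := by
  have h := two_mul_le_add_sq (s * |a|) |b|
  rw [abs_mul, show s * a ^ 2 + b ^ 2 / s = ((s * |a|) ^ 2 + |b| ^ 2) / s by
    rw [mul_pow, sq_abs, sq_abs]; field_simp, div_div, le_div_iff₀ (by positivity)]
  linarith

lemma le_mul_exp_of_deriv_le_div_sq {E E' : ℝ → ℝ} {K : ℝ}
    (hE : ∀ s, 1 ≤ s → HasDerivAt E (E' s) s) (hE_nonneg : ∀ s, 1 ≤ s → 0 ≤ E s) (hK : 0 ≤ K)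
    (hE' : ∀ s, 1 ≤ s → E' s ≤ K * E s / s ^ 2) {s : ℝ} (hs : 1 ≤ s) :
    E s ≤ E 1 * Real.exp K := by
  have hderiv (t : ℝ) (ht : 1 ≤ t) : HasDerivAt (fun t ↦ E t * Real.exp (K / t))
      ((E' t - K * E t / t ^ 2) * Real.exp (K / t)) t := by
    have hexp := ((hasDerivAt_inv (by positivity : t ≠ 0)).const_mul K).exp
    simp only [← div_eq_mul_inv] at hexp
    exact ((hE t ht).mul hexp).congr_deriv (by ring)
  have hanti : AntitoneOn (fun t ↦ E t * Real.exp (K / t)) (Ici 1) := by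
    refine antitoneOn_of_hasDerivWithinAt_nonpos (convex_Ici 1)
      (fun t ht ↦ (hderiv t ht).continuousAt.continuousWithinAt)
      (fun t ht ↦ (hderiv t (interior_subset ht)).hasDerivWithinAt) fun t ht ↦ ?_
    exact mul_nonpos_of_nonpos_of_nonneg (sub_nonpos.2 (hE' t (interior_subset ht)))
      (Real.exp_nonneg _)
  calc E s ≤ E s * Real.exp (K / s) :=
        le_mul_of_one_le_right (hE_nonneg s hs) (Real.one_le_exp (by positivity))
    _ ≤ E 1 * Real.exp (K / 1) := hanti self_mem_Ici hs hs
    _ = E 1 * Real.exp K := by rw [div_one]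

lemma isBigO_one_of_deriv_isBigO_inv_sq {E : Type*} [NormedAddCommGroup E] [NormedSpace ℝ E]
    {H H' : ℝ → E} (hH : ∀ s, 1 ≤ s → HasDerivAt H (H' s) s)
    (hH' : H' =O[𝓟 (Ici 1)] fun s ↦ (s ^ 2)⁻¹) : H =O[𝓟 (Ici 1)] fun _ ↦ (1 : ℝ) := by
  obtain ⟨K, hK, hbound⟩ := hH'.exists_nonneg
  rw [isBigOWith_principal] at hbound
  refine isBigO_principal.2 ⟨‖H 1‖ + K, fun s hs ↦ ?_⟩
  have hbarrier (t : ℝ) (ht : 1 ≤ t) :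
      HasDerivAt (fun t ↦ ‖H 1‖ + K * (1 - t⁻¹)) (K * (t ^ 2)⁻¹) t :=
    ((((hasDerivAt_inv (by positivity)).const_sub 1).const_mul K).const_add _).congr_deriv (by ring)
  have hle : ‖H s‖ ≤ ‖H 1‖ + K * (1 - s⁻¹) :=
    image_norm_le_of_norm_deriv_right_le_deriv_boundary'
      (fun t ht ↦ (hH t ht.1).continuousAt.continuousWithinAt)
      (fun t ht ↦ (hH t ht.1).hasDerivWithinAt) (by simp)
      (fun t ht ↦ (hbarrier t ht.1).continuousAt.continuousWithinAt)
      (fun t ht ↦ (hbarrier t ht.1).hasDerivWithinAt)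
      (fun t ht ↦ (hbound t ht.1).trans_eq (by simp)) (right_mem_Icc.2 hs)
  have hs_inv : 0 ≤ s⁻¹ := inv_nonneg.2 (zero_le_one.trans hs)
  rw [norm_one, mul_one]
  nlinarith

lemma hasDerivAt_neg_sq (s : ℝ) : HasDerivAt (fun s : ℝ ↦ -s ^ 2) (-(2 * s)) s := by
  simpa using (hasDerivAt_pow 2 s).fun_neg

lemma isBigO_Iic_of_comp_neg_sq {f g : ℝ → ℝ}
    (h : (fun s ↦ f (-s ^ 2)) =O[𝓟 (Ici 1)] fun s ↦ g (-s ^ 2)) : f =O[𝓟 (Iic (-1))] g := by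
  have hsqrt : Tendsto (fun y : ℝ ↦ √(-y)) (𝓟 (Iic (-1))) (𝓟 (Ici 1)) :=
    tendsto_principal_principal.2 fun y hy ↦ Real.one_le_sqrt.2 (le_neg_of_le_neg hy)
  have hsq : ∀ y ∈ Iic (-1 : ℝ), -√(-y) ^ 2 = y := fun y hy ↦ by
    rw [Real.sq_sqrt (by linarith [mem_Iic.1 hy]), neg_neg]
  exact (h.comp_tendsto hsqrt).congr'
    (eventually_principal.2 fun y hy ↦ congrArg f (hsq y hy))
    (eventually_principal.2 fun y hy ↦ congrArg g (hsq y hy))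

lemma abs_neg_sq_rpow_sq {s : ℝ} (hs : 0 ≤ s) (p : ℝ) : (|(-s ^ 2)| ^ p) ^ 2 = s ^ (4 * p) := by
  rw [abs_neg, abs_of_nonneg (by positivity), ← Real.rpow_natCast, ← Real.rpow_natCast,
    ← Real.rpow_mul hs, ← Real.rpow_mul hs]
  congr 1
  push_cast
  ring

lemma airyEnergy_le_correctedAiryEnergy (f : ℝ → ℝ) {s : ℝ} (hs : 1 ≤ s) :
    3 / 4 * airyEnergy f s ≤ correctedAiryEnergy f s := by
  have hcross : f (-s ^ 2) * deriv f (-s ^ 2) / (2 * s ^ 3) ≤ airyEnergy f s / 4 :=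
    calc f (-s ^ 2) * deriv f (-s ^ 2) / (2 * s ^ 3)
        ≤ |f (-s ^ 2) * deriv f (-s ^ 2)| / (2 * s ^ 3) := by gcongr; exact le_abs_self _
      _ ≤ |f (-s ^ 2) * deriv f (-s ^ 2)| / (2 * 1) := by gcongr; exact one_le_pow₀ hs
      _ ≤ airyEnergy f s / 2 / (2 * 1) := by
        gcongr; exact abs_mul_le_weighted_sq_add_sq (by linarith) _ _
      _ = airyEnergy f s / 4 := by ring
  rw [correctedAiryEnergy]
  linarith

lemma airyEnergy_nonneg (f : ℝ → ℝ) {s : ℝ} (hs : 0 ≤ s) : 0 ≤ airyEnergy f s := by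
  rw [airyEnergy]; positivity

namespace IsAirySolution

variable {f : ℝ → ℝ} (hf : IsAirySolution f)
include hf

lemma hasDerivAt (x : ℝ) : HasDerivAt f (deriv f x) x :=
  (hf.differentiable x).hasDerivAt

lemma hasDerivAt_comp_neg_sq (s : ℝ) :
    HasDerivAt (fun s ↦ f (-s ^ 2)) (-2 * s * deriv f (-s ^ 2)) s :=
  ((hf.hasDerivAt _).comp s (hasDerivAt_neg_sq s)).congr_deriv (by ring)

lemma hasDerivAt_deriv_comp_neg_sq (s : ℝ) :
    HasDerivAt (fun s ↦ deriv f (-s ^ 2)) (2 * s ^ 3 * f (-s ^ 2)) s :=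
  ((hf.hasDerivAt_deriv _).comp s (hasDerivAt_neg_sq s)).congr_deriv (by ring)

lemma hasDerivAt_correctedAiryEnergy {s : ℝ} (hs : 0 < s) :
    HasDerivAt (correctedAiryEnergy f)
      (3 * (f (-s ^ 2) * deriv f (-s ^ 2)) / (2 * s ^ 4)) s := by
  have ha := hf.hasDerivAt_comp_neg_sq s
  have hb := hf.hasDerivAt_deriv_comp_neg_sq s
  have hcross := (ha.mul hb).div ((hasDerivAt_pow 3 s).const_mul 2) (by positivity : 2 * s ^ 3 ≠ 0)
  refine ((((hasDerivAt_id s).mul (ha.pow 2)).add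
    ((hb.pow 2).div (hasDerivAt_id s) hs.ne')).sub hcross).congr_deriv ?_
  simp only [Pi.pow_apply, Pi.mul_apply, id]
  push_cast
  field_simp
  ring

lemma airyEnergy_isBigO_one : airyEnergy f =O[𝓟 (Ici 1)] fun _ ↦ (1 : ℝ) := by
  have hnonneg (s : ℝ) (hs : 1 ≤ s) : 0 ≤ correctedAiryEnergy f s := by
    linarith [airyEnergy_le_correctedAiryEnergy f hs, airyEnergy_nonneg f (zero_le_one.trans hs)]
  have hrate (s : ℝ) (hs : 1 ≤ s) :
      3 * (f (-s ^ 2) * deriv f (-s ^ 2)) / (2 * s ^ 4) ≤ 1 * correctedAiryEnergy f s / s ^ 2 := by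
    have hprod : f (-s ^ 2) * deriv f (-s ^ 2) ≤ airyEnergy f s / 2 :=
      (le_abs_self _).trans (abs_mul_le_weighted_sq_add_sq (by linarith) _ _)
    calc 3 * (f (-s ^ 2) * deriv f (-s ^ 2)) / (2 * s ^ 4)
        ≤ 3 * (airyEnergy f s / 2) / (2 * s ^ 4) := by gcongr
      _ = 3 / 4 * airyEnergy f s / s ^ 4 := by ring
      _ ≤ correctedAiryEnergy f s / s ^ 4 := by
        gcongr; exact airyEnergy_le_correctedAiryEnergy f hs
      _ ≤ correctedAiryEnergy f s / s ^ 2 := by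
        gcongr
        exacts [hnonneg s hs, by norm_num]
      _ = 1 * correctedAiryEnergy f s / s ^ 2 := by rw [one_mul]
  refine isBigO_principal.2 ⟨4 / 3 * (correctedAiryEnergy f 1 * Real.exp 1), fun s hs ↦ ?_⟩
  have hbound := le_mul_exp_of_deriv_le_div_sq
    (fun s hs ↦ hf.hasDerivAt_correctedAiryEnergy (by linarith)) hnonneg zero_le_one hrate hs
  rw [norm_one, mul_one, Real.norm_of_nonneg (airyEnergy_nonneg f (zero_le_one.trans hs))]
  linarith [airyEnergy_le_correctedAiryEnergy f hs]

lemma sq_comp_neg_sq_isBigO : (fun s ↦ f (-s ^ 2) ^ 2) =O[𝓟 (Ici 1)] fun s ↦ s⁻¹ := by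
  obtain ⟨C, hC⟩ := isBigO_principal.1 hf.airyEnergy_isBigO_one
  refine isBigO_principal.2 ⟨C, fun s hs ↦ ?_⟩
  have hs0 : 0 < s := zero_lt_one.trans_le hs
  have henergy : airyEnergy f s ≤ C := (le_abs_self _).trans (by simpa using hC s hs)
  rw [Real.norm_of_nonneg (sq_nonneg _), Real.norm_of_nonneg (inv_nonneg.2 hs0.le),
    ← div_eq_mul_inv, le_div_iff₀' hs0]
  exact (le_add_of_nonneg_right (by positivity)).trans henergy

lemma sq_deriv_comp_neg_sq_isBigO : (fun s ↦ deriv f (-s ^ 2) ^ 2) =O[𝓟 (Ici 1)] fun s ↦ s := by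
  obtain ⟨C, hC⟩ := isBigO_principal.1 hf.airyEnergy_isBigO_one
  refine isBigO_principal.2 ⟨C, fun s hs ↦ ?_⟩
  have hs0 : 0 < s := zero_lt_one.trans_le hs
  have henergy : airyEnergy f s ≤ C := (le_abs_self _).trans (by simpa using hC s hs)
  rw [Real.norm_of_nonneg (sq_nonneg _), Real.norm_of_nonneg hs0.le, ← div_le_iff₀ hs0]
  exact (le_add_of_nonneg_left (by positivity)).trans henergy

lemma isBigO_rpow : f =O[𝓟 (Iic (-1))] fun y ↦ |y| ^ (-(1 : ℝ) / 4) := by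
  refine isBigO_Iic_of_comp_neg_sq (.of_pow two_ne_zero ?_)
  refine hf.sq_comp_neg_sq_isBigO.trans_eventuallyEq (eventually_principal.2 fun s hs ↦ ?_)
  rw [Pi.pow_apply, abs_neg_sq_rpow_sq (zero_le_one.trans hs)]
  norm_num [Real.rpow_neg_one]

lemma deriv_isBigO_rpow : deriv f =O[𝓟 (Iic (-1))] fun y ↦ |y| ^ ((1 : ℝ) / 4) := by
  refine isBigO_Iic_of_comp_neg_sq (.of_pow two_ne_zero ?_)
  refine hf.sq_deriv_comp_neg_sq_isBigO.trans_eventuallyEq (eventually_principal.2 fun s hs ↦ ?_)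
  rw [Pi.pow_apply, abs_neg_sq_rpow_sq (zero_le_one.trans hs)]
  norm_num

/-- `F - f' / y` has derivative `f' / y²`, which is absolutely integrable at `-∞`. -/
lemma antideriv_isBigO_one {F : ℝ → ℝ} (hF : ∀ y, HasDerivAt F (f y) y) :
    F =O[𝓟 (Iic (-1))] fun _ ↦ (1 : ℝ) := by
  have hlin : (fun s ↦ deriv f (-s ^ 2)) =O[𝓟 (Ici 1)] fun s ↦ s := by
    refine .of_pow two_ne_zero (hf.sq_deriv_comp_neg_sq_isBigO.trans (.of_norm_eventuallyLE ?_))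
    refine eventually_principal.2 fun s hs ↦ ?_
    have hs1 : 1 ≤ s := hs
    simpa [abs_of_nonneg (zero_le_one.trans hs1)] using le_self_pow₀ hs1 two_ne_zero
  have hratio : (fun s ↦ deriv f (-s ^ 2) / s ^ 2) =O[𝓟 (Ici 1)] fun _ ↦ (1 : ℝ) := by
    refine (hlin.mul (isBigO_refl (fun s : ℝ ↦ (s ^ 2)⁻¹) _)).trans
      (isBigO_principal.2 ⟨1, fun s hs ↦ ?_⟩)
    have hs0 : 0 < s := zero_lt_one.trans_le hs
    rw [show s * (s ^ 2)⁻¹ = s⁻¹ by field_simp, Real.norm_of_nonneg (inv_nonneg.2 hs0.le)]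
    simpa using inv_le_one_of_one_le₀ hs
  have hderiv (s : ℝ) (hs : 1 ≤ s) :
      HasDerivAt (fun s ↦ F (-s ^ 2) + deriv f (-s ^ 2) / s ^ 2)
        (-2 * (deriv f (-s ^ 2) * (s ^ 3)⁻¹)) s := by
    refine (((hF (-s ^ 2)).comp s (hasDerivAt_neg_sq s)).add
      ((hf.hasDerivAt_deriv_comp_neg_sq s).div (hasDerivAt_pow 2 s) (by positivity))).congr_deriv ?_
    push_cast
    field_simp
    ring
  have hderiv_isBigO : (fun s ↦ -2 * (deriv f (-s ^ 2) * (s ^ 3)⁻¹)) =O[𝓟 (Ici 1)]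
      fun s ↦ (s ^ 2)⁻¹ := by
    refine ((hlin.mul (isBigO_refl (fun s : ℝ ↦ (s ^ 3)⁻¹) _)).const_mul_left _).trans_eventuallyEq
      (eventually_principal.2 fun s hs ↦ ?_)
    have hs0 : s ≠ 0 := (zero_lt_one.trans_le hs).ne'
    field_simp
  refine isBigO_Iic_of_comp_neg_sq
    (((isBigO_one_of_deriv_isBigO_inv_sq hderiv hderiv_isBigO).sub hratio).congr_left fun s ↦ ?_)
  exact add_sub_cancel_right _ _

lemma hasDerivAt_shifted_wronskian {g : ℝ → ℝ} (hg : IsAirySolution g) (a b s : ℝ) :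
    HasDerivAt (fun s ↦ f (a + s) * deriv g (b + s) - deriv f (a + s) * g (b + s))
      ((b - a) * (f (a + s) * g (b + s))) s :=
  ((((hf.hasDerivAt _).comp_const_add a s).mul ((hg.hasDerivAt_deriv _).comp_const_add b s)).sub
    (((hf.hasDerivAt_deriv _).comp_const_add a s).mul
      ((hg.hasDerivAt _).comp_const_add b s))).congr_deriv (by ring)

end IsAirySolution

/-! ### The Airy function as a contour integral -/

section ContourIntegral

open Complex

/-- The complex Airy integrand `exp(i(z³/3 + xz))`, whose real part on the real axis is the
integrand of `Ai`. -/
noncomputable def airyExp (x : ℝ) (z : ℂ) : ℂ := cexp (I * (z ^ 3 / 3 + x * z))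

/-- The `k`-th `x`-derivative of `airyExp x`, on the line `Im z = 1`. -/
noncomputable def airyIntegrand (k : ℕ) (x t : ℝ) : ℂ := (I * (t + I)) ^ k * airyExp x (t + I)

/-- The `k`-th `x`-derivative of the integral of `airyExp x` along the half-line `i + [0, ∞)`,
where, unlike on the real axis, it converges absolutely. -/
noncomputable def airyContourIntegral (k : ℕ) (x : ℝ) : ℂ :=
  ∫ t in Ioi (0 : ℝ), airyIntegrand k x t

lemma differentiable_airyExp (x : ℝ) : Differentiable ℂ (airyExp x) := by
  unfold airyExp; fun_prop

lemma continuous_airyExp (x : ℝ) : Continuous (airyExp x) :=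
  (differentiable_airyExp x).continuous

lemma norm_airyExp (x : ℝ) (z : ℂ) :
    ‖airyExp x z‖ = Real.exp (-(z.re ^ 2 * z.im) + z.im ^ 3 / 3 - x * z.im) := by
  rw [airyExp, norm_exp]
  congr 1
  rw [show z ^ 3 / 3 = (z ^ 3 : ℂ) / (3 : ℝ) by norm_num]
  simp [pow_succ]
  ring

lemma airyExp_mul_I (x s : ℝ) : airyExp x (s * I) = Real.exp (s ^ 3 / 3 - x * s) := by
  rw [airyExp, ofReal_exp]
  congr 1
  push_cast
  linear_combination ((I ^ 2 - 1) * s ^ 3 / 3 + x * s) * I_sq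

lemma re_airyExp_ofReal (x t : ℝ) : (airyExp x t).re = Real.cos (t ^ 3 / 3 + x * t) := by
  rw [airyExp, ← exp_ofReal_mul_I_re]
  push_cast
  ring_nf

lemma norm_airyIntegrand_le (k : ℕ) (x : ℝ) {t : ℝ} (ht : 0 ≤ t) :
    ‖airyIntegrand k x t‖ ≤ k.factorial * Real.exp (7 / 3) * (Real.exp (-x) * Real.exp (-t)) := by
  have hpow : ‖(t : ℂ) + I‖ ^ k ≤ k.factorial * Real.exp (t + 1) :=
    calc ‖(t : ℂ) + I‖ ^ k ≤ (t + 1) ^ k := by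
          gcongr
          simpa [abs_of_nonneg ht] using norm_add_le (t : ℂ) I
      _ ≤ k.factorial * Real.exp (t + 1) := by
          rw [← div_le_iff₀' (by positivity)]
          exact Real.pow_div_factorial_le_exp _ (by positivity) k
  have hexp : ‖airyExp x (t + I)‖ = Real.exp (-t ^ 2 + 1 / 3 - x) := by
    rw [norm_airyExp]; simp
  rw [airyIntegrand, norm_mul, norm_pow, norm_mul, norm_I, one_mul, hexp]
  calc ‖(t : ℂ) + I‖ ^ k * Real.exp (-t ^ 2 + 1 / 3 - x)
      ≤ k.factorial * Real.exp (t + 1) * Real.exp (-t ^ 2 + 1 / 3 - x) := by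
        gcongr
    _ = k.factorial * Real.exp (t + 1 + (-t ^ 2 + 1 / 3 - x)) := by rw [mul_assoc, ← Real.exp_add]
    _ ≤ k.factorial * Real.exp (7 / 3 + (-x + -t)) := by
        gcongr ?_ * Real.exp ?_
        nlinarith [sq_nonneg (t - 1)]
    _ = _ := by rw [Real.exp_add, Real.exp_add, mul_assoc]

lemma continuous_airyIntegrand (k : ℕ) (x : ℝ) : Continuous (airyIntegrand k x) := by
  unfold airyIntegrand airyExp; fun_prop

lemma integrableOn_airyIntegrand (k : ℕ) (x : ℝ) :
    IntegrableOn (airyIntegrand k x) (Ioi 0) := by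
  refine Integrable.mono' (((integrableOn_exp_neg_Ioi 0).const_mul (Real.exp (-x))).const_mul
    (k.factorial * Real.exp (7 / 3))) (continuous_airyIntegrand k x).aestronglyMeasurable ?_
  filter_upwards [ae_restrict_mem measurableSet_Ioi] with t ht
  exact norm_airyIntegrand_le k x (le_of_lt ht)

lemma airyContourIntegral_isBigO_exp_neg (k : ℕ) :
    airyContourIntegral k =O[⊤] fun x ↦ Real.exp (-x) := by
  refine isBigO_top.2 ⟨k.factorial * Real.exp (7 / 3), fun x ↦ ?_⟩
  have hle := norm_integral_le_of_norm_le
    (((integrableOn_exp_neg_Ioi 0).const_mul (Real.exp (-x))).const_mul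
      (k.factorial * Real.exp (7 / 3)))
    ((ae_restrict_mem measurableSet_Ioi).mono fun t ht ↦
      norm_airyIntegrand_le k x (le_of_lt ht))
  rwa [integral_const_mul, integral_const_mul, integral_exp_neg_Ioi_zero, mul_one,
    ← Real.norm_of_nonneg (Real.exp_nonneg (-x))] at hle

lemma hasDerivAt_airyIntegrand (k : ℕ) (x t : ℝ) :
    HasDerivAt (fun x ↦ airyIntegrand k x t) (airyIntegrand (k + 1) x t) x := by
  have hphase : HasDerivAt (fun x : ℝ ↦ I * (((t : ℂ) + I) ^ 3 / 3 + x * (t + I)))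
      (I * (1 * (t + I))) x :=
    ((ofRealCLM.hasDerivAt.mul_const _).const_add _).const_mul I
  refine (hphase.cexp.const_mul ((I * (t + I)) ^ k)).congr_deriv ?_
  rw [airyIntegrand, airyExp]
  ring

lemma hasDerivAt_airyContourIntegral (k : ℕ) (x : ℝ) :
    HasDerivAt (airyContourIntegral k) (airyContourIntegral (k + 1) x) x := by
  refine (hasDerivAt_integral_of_dominated_loc_of_deriv_le (Ioi_mem_nhds (sub_one_lt x))
    (.of_forall fun y ↦ (continuous_airyIntegrand k y).aestronglyMeasurable)
    (integrableOn_airyIntegrand k x) (continuous_airyIntegrand (k + 1) x).aestronglyMeasurable ?_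
    (((integrableOn_exp_neg_Ioi 0).const_mul (Real.exp (-(x - 1)))).const_mul
      ((k + 1).factorial * Real.exp (7 / 3)))
    (.of_forall fun t y _ ↦ hasDerivAt_airyIntegrand k y t)).2
  filter_upwards [ae_restrict_mem measurableSet_Ioi] with t ht y hy
  refine (norm_airyIntegrand_le (k + 1) y (le_of_lt ht)).trans ?_
  gcongr
  exact le_of_lt hy

lemma tendsto_airyExp_add_mul_I (x : ℝ) {s : ℝ} (hs : 0 < s) :
    Tendsto (fun b : ℝ ↦ airyExp x (b + s * I)) atTop (𝓝 0) := by
  have hnorm (b : ℝ) : ‖airyExp x (b + s * I)‖ = Real.exp (-(b ^ 2 * s) + (s ^ 3 / 3 - x * s)) := by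
    rw [norm_airyExp]; simp [add_sub_assoc]
  rw [tendsto_zero_iff_norm_tendsto_zero]
  simp only [hnorm]
  exact Real.tendsto_exp_atBot.comp (tendsto_atBot_add_const_right _ _
    (tendsto_neg_atTop_atBot.comp ((tendsto_pow_atTop two_ne_zero).atTop_mul_const hs)))

lemma tendsto_integral_airyExp_vertical (x : ℝ) :
    Tendsto (fun b : ℝ ↦ ∫ s in (0 : ℝ)..1, airyExp x (b + s * I)) atTop (𝓝 0) := by
  suffices h : Tendsto (fun b : ℝ ↦ ∫ s in (0 : ℝ)..1, airyExp x (b + s * I)) atTop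
      (𝓝 (∫ _ in (0 : ℝ)..1, 0)) by simpa using h
  refine intervalIntegral.tendsto_integral_filter_of_dominated_convergence
    (fun _ ↦ Real.exp (1 / 3 + |x|)) (.of_forall fun b ↦ ?_)
    (.of_forall fun b ↦ .of_forall fun s hs ↦ ?_) intervalIntegrable_const
    (.of_forall fun s hs ↦ ?_)
  · exact ((continuous_airyExp x).comp (by fun_prop)).aestronglyMeasurable
  all_goals rw [uIoc_of_le zero_le_one] at hs
  · have hcube : s ^ 3 ≤ 1 := pow_le_one₀ hs.1.le hs.2
    have hlin : -(x * s) ≤ |x| := by nlinarith [neg_abs_le x, abs_nonneg x, hs.1, hs.2]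
    have hsq : 0 ≤ b ^ 2 * s := mul_nonneg (sq_nonneg b) hs.1.le
    rw [norm_airyExp, Real.exp_le_exp]
    simp
    linarith
  · exact tendsto_airyExp_add_mul_I x hs.1

/-- Cauchy's theorem on the rectangle with corners `0` and `b + i`; the left side contributes a
purely imaginary number. -/
lemma integral_cos_eq_re_integral_airyIntegrand (x b : ℝ) :
    (∫ t in (0 : ℝ)..b, Real.cos (t ^ 3 / 3 + x * t)) =
      (∫ t in (0 : ℝ)..b, airyIntegrand 0 x t).re -
        (I * ∫ s in (0 : ℝ)..1, airyExp x (b + s * I)).re := by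
  have hrect := integral_boundary_rect_eq_zero_of_differentiableOn (airyExp x) 0 (b + I)
    (differentiable_airyExp x).differentiableOn
  have hbottom : (∫ t in (0 : ℝ)..b, airyExp x t).re =
      ∫ t in (0 : ℝ)..b, Real.cos (t ^ 3 / 3 + x * t) := by
    simp only [← re_airyExp_ofReal]
    exact (reCLM.intervalIntegral_comp_comm
      (((continuous_airyExp x).comp continuous_ofReal).intervalIntegrable _ _)).symm
  have hleft : (I * ∫ s in (0 : ℝ)..1, airyExp x (s * I)).re = 0 := by
    simp only [airyExp_mul_I]
    rw [intervalIntegral.integral_ofReal]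
    simp
  have hre := congrArg re hrect
  simp only [zero_re, zero_im, add_re, ofReal_re, I_re, add_zero, add_im, ofReal_im, I_im, zero_add,
    ofReal_zero, zero_mul, ofReal_one, one_mul, smul_eq_mul, sub_re, hbottom, hleft] at hre
  simp only [airyIntegrand, pow_zero, one_mul]
  linarith

lemma Ai_eq_re_airyContourIntegral (x : ℝ) : Ai x = 1 / Real.pi * (airyContourIntegral 0 x).re := by
  rw [Ai]
  congr 1
  refine Tendsto.limUnder_eq ?_
  simp only [integral_cos_eq_re_integral_airyIntegrand]
  have htop : Tendsto (fun b : ℝ ↦ ∫ t in (0 : ℝ)..b, airyIntegrand 0 x t) atTop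
      (𝓝 (airyContourIntegral 0 x)) :=
    intervalIntegral_tendsto_integral_Ioi 0 (integrableOn_airyIntegrand 0 x) tendsto_id
  have hright := (tendsto_integral_airyExp_vertical x).const_mul I
  simpa using ((continuous_re.tendsto _).comp htop).sub ((continuous_re.tendsto _).comp hright)

lemma hasDerivAt_re_airyContourIntegral (k : ℕ) (x : ℝ) :
    HasDerivAt (fun x ↦ 1 / Real.pi * (airyContourIntegral k x).re)
      (1 / Real.pi * (airyContourIntegral (k + 1) x).re) x :=
  (reCLM.hasFDerivAt.comp_hasDerivAt x (hasDerivAt_airyContourIntegral k x)).const_mul _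

lemma hasDerivAt_Ai (x : ℝ) : HasDerivAt Ai (1 / Real.pi * (airyContourIntegral 1 x).re) x := by
  rw [funext Ai_eq_re_airyContourIntegral]
  exact hasDerivAt_re_airyContourIntegral 0 x

lemma deriv_Ai_eq_re_airyContourIntegral (x : ℝ) :
    deriv Ai x = 1 / Real.pi * (airyContourIntegral 1 x).re :=
  (hasDerivAt_Ai x).deriv

lemma hasDerivAt_airyExp_line (x t : ℝ) :
    HasDerivAt (fun t : ℝ ↦ -I * airyExp x (t + I))
      (x * airyIntegrand 0 x t - airyIntegrand 2 x t) t := by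
  have hline : HasDerivAt (fun t : ℝ ↦ (t : ℂ) + I) 1 t := ofRealCLM.hasDerivAt.add_const I
  have hphase := (((hline.pow 3).div_const 3).add (hline.const_mul (x : ℂ))).const_mul I
  refine (hphase.cexp.const_mul (-I)).congr_deriv ?_
  simp only [airyIntegrand, airyExp, Pi.add_apply, Pi.pow_apply]
  push_cast
  linear_combination
    -(cexp (I * (((t : ℂ) + I) ^ 3 / 3 + x * (t + I)))) * (x : ℂ) * I_sq

/-- `x F₀ - F₂` is the total derivative of `-i exp(i(z³/3 + xz))` along the contour, whose boundary
value at `z = i` is purely imaginary. -/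
lemma re_airyContourIntegral_two (x : ℝ) :
    (airyContourIntegral 2 x).re = x * (airyContourIntegral 0 x).re := by
  have hint0 := (integrableOn_airyIntegrand 0 x).const_mul (x : ℂ)
  have hint2 := integrableOn_airyIntegrand 2 x
  have hlim : Tendsto (fun t : ℝ ↦ -I * airyExp x (t + I)) atTop (𝓝 0) := by
    simpa using (tendsto_airyExp_add_mul_I x one_pos).const_mul (-I)
  have hftc := integral_Ioi_of_hasDerivAt_of_tendsto'
    (fun t _ ↦ hasDerivAt_airyExp_line x t) (hint0.sub hint2) hlim
  rw [integral_sub hint0 hint2, integral_const_mul] at hftc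
  have hre : x * (airyContourIntegral 0 x).re - (airyContourIntegral 2 x).re = 0 := by
    have hstart : airyExp x ((0 : ℝ) + I) = Real.exp (1 / 3 - x) := by
      simpa [-ofReal_exp] using airyExp_mul_I x 1
    have := congrArg re hftc
    rwa [hstart, sub_re, re_ofReal_mul, zero_sub, neg_mul, neg_neg, re_mul_ofReal, I_re,
      zero_mul] at this
  linarith

theorem isAirySolution_Ai : IsAirySolution Ai where
  differentiable x := (hasDerivAt_Ai x).differentiableAt
  hasDerivAt_deriv x := by
    rw [funext deriv_Ai_eq_re_airyContourIntegral]
    refine (hasDerivAt_re_airyContourIntegral 1 x).congr_deriv ?_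
    rw [Ai_eq_re_airyContourIntegral, re_airyContourIntegral_two]
    ring

end ContourIntegral

/-! ### Exponential decay and tail integrals -/

/-- Continuous functions bounded on the whole line by a multiple of `exp (-y)`: they may grow
exponentially at `-∞`, but are integrable at `+∞`. -/
structure HasExpDecay (f : ℝ → ℝ) : Prop where
  continuous : Continuous f
  isBigO : f =O[⊤] fun y ↦ Real.exp (-y)

/-- The integral of `f` over `(y, ∞)`. -/
noncomputable def tailIntegral (f : ℝ → ℝ) (y : ℝ) : ℝ := ∫ u in Ioi y, f u

/-- The `L²(0, ∞)` pairing of the translate of `f` by `a` with the translate by `b` of its tail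
integral. -/
noncomputable def tailPairing (f : ℝ → ℝ) (a b : ℝ) : ℝ :=
  ∫ s in Ioi (0 : ℝ), f (a + s) * tailIntegral f (b + s)

lemma hasExpDecay_exp_neg : HasExpDecay fun y ↦ Real.exp (-y) where
  continuous := by fun_prop
  isBigO := isBigO_refl _ _

namespace HasExpDecay

variable {f g : ℝ → ℝ} (hf : HasExpDecay f)
include hf

lemma comp_const_add (a : ℝ) : HasExpDecay fun s ↦ f (a + s) where
  continuous := hf.continuous.comp (by fun_prop)
  isBigO := by
    refine ((hf.isBigO.comp_tendsto (tendsto_top (f := fun s ↦ a + s))).trans_eventuallyEq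
      (.of_forall fun s ↦ ?_)).of_const_mul_right (c := Real.exp (-a))
    rw [Function.comp_apply, neg_add, Real.exp_add]

lemma isBigO_atTop : f =O[atTop] fun y ↦ Real.exp (-y) :=
  hf.isBigO.mono le_top

lemma tendsto_zero : Tendsto f atTop (𝓝 0) :=
  hf.isBigO_atTop.trans_tendsto (Real.tendsto_exp_atBot.comp tendsto_neg_atTop_atBot)

lemma integrableOn_Ioi (a : ℝ) : IntegrableOn f (Ioi a) :=
  integrable_of_isBigO_exp_neg one_pos hf.continuous.continuousOn (by simpa using hf.isBigO_atTop)

lemma integrableOn_Ioi_mul (hg : HasExpDecay g) (a : ℝ) :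
    IntegrableOn (fun s ↦ f s * g s) (Ioi a) :=
  integrable_of_isBigO_exp_neg one_pos (hf.continuous.mul hg.continuous).continuousOn
    (by simpa using hf.isBigO_atTop.mul (hg.tendsto_zero.isBigO_one ℝ))

lemma intervalIntegral_eq_tailIntegral_sub (a b : ℝ) :
    ∫ u in a..b, f u = tailIntegral f a - tailIntegral f b :=
  (intervalIntegral.integral_Ioi_sub_Ioi' (hf.integrableOn_Ioi a) (hf.integrableOn_Ioi b)).symm

lemma hasDerivAt_tailIntegral (y : ℝ) : HasDerivAt (tailIntegral f) (-f y) y := by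
  have htail : tailIntegral f = fun y ↦ tailIntegral f 0 - ∫ u in (0 : ℝ)..y, f u := by
    funext y
    rw [hf.intervalIntegral_eq_tailIntegral_sub, sub_sub_cancel]
  rw [htail]
  exact (hf.continuous.integral_hasStrictDerivAt 0 y).hasDerivAt.const_sub _

lemma hasExpDecay_tailIntegral : HasExpDecay (tailIntegral f) where
  continuous := continuous_iff_continuousAt.2 fun y ↦ (hf.hasDerivAt_tailIntegral y).continuousAt
  isBigO := by
    obtain ⟨C, hC⟩ := isBigO_top.1 hf.isBigO
    refine isBigO_top.2 ⟨C, fun y ↦ ?_⟩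
    have hle := norm_integral_le_of_norm_le
      ((hasExpDecay_exp_neg.integrableOn_Ioi y).const_mul C)
      (.of_forall fun u ↦ by simpa using hC u : ∀ᵐ u ∂volume.restrict (Ioi y), ‖f u‖ ≤ _)
    rwa [integral_const_mul, integral_exp_neg_Ioi, ← Real.norm_of_nonneg (Real.exp_nonneg (-y))]
      at hle

lemma integrable_shift_mul_shift (hg : HasExpDecay g) (a b c : ℝ) :
    Integrable (Function.uncurry fun u s ↦ f (u + s) * g (c + s))
      ((volume.restrict (uIoc a b)).prod (volume.restrict (Ioi 0))) := by
  have hexp : Integrable (fun u ↦ Real.exp (-u)) (volume.restrict (uIoc a b)) :=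
    (hasExpDecay_exp_neg.integrableOn_Ioi (min a b)).mono_set Ioc_subset_Ioi_self
  have hdom := hexp.mul_prod
    (hasExpDecay_exp_neg.integrableOn_Ioi_mul (hg.comp_const_add c) 0)
  refine IsBigO.integrable ?_ ?_ hdom
  · have := hf.continuous
    have := hg.continuous
    exact Continuous.aestronglyMeasurable (by unfold Function.uncurry; fun_prop)
  · have hshift : (fun p : ℝ × ℝ ↦ f (p.1 + p.2)) =O[⊤]
        fun p ↦ Real.exp (-p.1) * Real.exp (-p.2) := by
      refine (hf.isBigO.comp_tendsto tendsto_top).trans_eventuallyEq (.of_forall fun p ↦ ?_)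
      rw [Function.comp_apply, neg_add, Real.exp_add]
    refine (hshift.mul (isBigO_refl (fun p : ℝ × ℝ ↦ g (c + p.2)) ⊤)).congr_right fun p ↦ ?_
    rw [mul_assoc]

lemma integrableOn_tailPairing (a b : ℝ) :
    IntegrableOn (fun s ↦ f (a + s) * tailIntegral f (b + s)) (Ioi 0) :=
  (hf.comp_const_add a).integrableOn_Ioi_mul (hf.hasExpDecay_tailIntegral.comp_const_add b) 0

lemma intervalIntegral_integral_shift_mul_shift (a b : ℝ) :
    ∫ u in a..b, ∫ s in Ioi (0 : ℝ), f (u + s) * f (a + s) =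
      tailPairing f a a - tailPairing f a b := by
  rw [intervalIntegral_integral_swap (hf.integrable_shift_mul_shift hf a b a), tailPairing,
    tailPairing, ← integral_sub (hf.integrableOn_tailPairing a a) (hf.integrableOn_tailPairing a b)]
  congr 1
  funext s
  rw [intervalIntegral.integral_mul_const, intervalIntegral.integral_comp_add_right,
    hf.intervalIntegral_eq_tailIntegral_sub]
  ring

lemma tailPairing_add_tailPairing_swap (a b : ℝ) :
    tailPairing f a b + tailPairing f b a = tailIntegral f a * tailIntegral f b := by
  have hab := hf.integrableOn_tailPairing a b
  have hba := hf.integrableOn_tailPairing b a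
  have hderiv (s : ℝ) : HasDerivAt
      (fun s ↦ -(tailIntegral f (a + s) * tailIntegral f (b + s)))
      (f (a + s) * tailIntegral f (b + s) + f (b + s) * tailIntegral f (a + s)) s :=
    (((hf.hasDerivAt_tailIntegral _).comp_const_add a s).mul
      ((hf.hasDerivAt_tailIntegral _).comp_const_add b s)).neg.congr_deriv (by ring)
  have hlim : Tendsto (fun s ↦ -(tailIntegral f (a + s) * tailIntegral f (b + s)))
      atTop (𝓝 0) := by
    simpa using ((hf.hasExpDecay_tailIntegral.comp_const_add a).tendsto_zero.mul
      (hf.hasExpDecay_tailIntegral.comp_const_add b).tendsto_zero).neg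
  rw [tailPairing, tailPairing, ← integral_add hab hba,
    integral_Ioi_of_hasDerivAt_of_tendsto' (fun s _ ↦ hderiv s) (hab.add hba) hlim]
  simp

lemma tailPairing_self (a : ℝ) : tailPairing f a a = tailIntegral f a ^ 2 / 2 := by
  linarith [hf.tailPairing_add_tailPairing_swap a a]

lemma tailPairing_isBigO_one (hbdd : tailIntegral f =O[⊤] fun _ ↦ (1 : ℝ)) (a : ℝ) :
    tailPairing f a =O[⊤] fun _ ↦ (1 : ℝ) := by
  obtain ⟨M, hM⟩ := isBigO_top.1 hbdd
  refine isBigO_top.2 ⟨∫ s in Ioi (0 : ℝ), ‖f (a + s)‖ * M, fun b ↦ ?_⟩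
  rw [norm_one, mul_one]
  refine norm_integral_le_of_norm_le
    (((hf.comp_const_add a).integrableOn_Ioi 0).norm.mul_const M) (.of_forall fun s ↦ ?_)
  rw [norm_mul]
  gcongr
  simpa using hM (b + s)

lemma tailPairing_swap_isBigO_one (hbdd : tailIntegral f =O[⊤] fun _ ↦ (1 : ℝ)) (b : ℝ) :
    (fun a ↦ tailPairing f a b) =O[⊤] fun _ ↦ (1 : ℝ) := by
  refine ((hbdd.const_mul_left (tailIntegral f b)).sub
    (hf.tailPairing_isBigO_one hbdd b)).congr_left fun a ↦ ?_
  rw [← hf.tailPairing_add_tailPairing_swap, add_sub_cancel_left]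

end HasExpDecay

lemma hasExpDecay_Ai : HasExpDecay Ai where
  continuous := isAirySolution_Ai.differentiable.continuous
  isBigO := by
    rw [funext Ai_eq_re_airyContourIntegral]
    exact ((isBigO_of_le _ fun x ↦ Complex.abs_re_le_norm _).trans
      (airyContourIntegral_isBigO_exp_neg 0)).const_mul_left _

lemma hasExpDecay_deriv_Ai : HasExpDecay (deriv Ai) where
  continuous := continuous_iff_continuousAt.2 fun x ↦
    (isAirySolution_Ai.hasDerivAt_deriv x).continuousAt
  isBigO := by
    rw [funext deriv_Ai_eq_re_airyContourIntegral]
    exact ((isBigO_of_le _ fun x ↦ Complex.abs_re_le_norm _).trans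
      (airyContourIntegral_isBigO_exp_neg 1)).const_mul_left _

lemma tailIntegral_Ai_isBigO_one : tailIntegral Ai =O[⊤] fun _ ↦ (1 : ℝ) := by
  have hleft : tailIntegral Ai =O[𝓟 (Iic (-1))] fun _ ↦ (1 : ℝ) := by
    refine (isAirySolution_Ai.antideriv_isBigO_one (F := fun y ↦ -tailIntegral Ai y)
      fun y ↦ ?_).of_neg_left
    exact (hasExpDecay_Ai.hasDerivAt_tailIntegral y).neg.congr_deriv (neg_neg _)
  have hright : tailIntegral Ai =O[𝓟 (Ici (-1))] fun _ ↦ (1 : ℝ) := by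
    refine (hasExpDecay_Ai.hasExpDecay_tailIntegral.isBigO.mono le_top).trans
      (isBigO_principal.2 ⟨Real.exp 1, fun y hy ↦ ?_⟩)
    simpa using neg_le.1 (mem_Ici.1 hy)
  simpa only [sup_principal, Iic_union_Ici, principal_univ] using hleft.sup hright

/-! ### The kernels `K_Ai` and `J₁` -/

lemma KAi_of_ne {x y : ℝ} (h : x ≠ y) :
    KAi x y = (Ai x * deriv Ai y - deriv Ai x * Ai y) / (x - y) :=
  if_neg h

lemma KAi_comm (x y : ℝ) : KAi x y = KAi y x := by
  rcases eq_or_ne x y with rfl | h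
  · rfl
  · rw [KAi_of_ne h, KAi_of_ne h.symm, ← neg_div_neg_eq]
    ring

lemma KAi_eq_integral {x y : ℝ} (h : x ≠ y) :
    KAi x y = ∫ s in Ioi (0 : ℝ), Ai (x + s) * Ai (y + s) := by
  have hlim : Tendsto (fun s ↦ Ai (x + s) * deriv Ai (y + s) - deriv Ai (x + s) * Ai (y + s))
      atTop (𝓝 0) := by
    simpa using ((hasExpDecay_Ai.comp_const_add x).tendsto_zero.mul
      (hasExpDecay_deriv_Ai.comp_const_add y).tendsto_zero).sub
      ((hasExpDecay_deriv_Ai.comp_const_add x).tendsto_zero.mul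
      (hasExpDecay_Ai.comp_const_add y).tendsto_zero)
  have hint := (hasExpDecay_Ai.comp_const_add x).integrableOn_Ioi_mul
    (hasExpDecay_Ai.comp_const_add y) 0
  have hftc := integral_Ioi_of_hasDerivAt_of_tendsto'
    (fun s _ ↦ isAirySolution_Ai.hasDerivAt_shifted_wronskian isAirySolution_Ai x y s)
    (hint.const_mul (y - x)) hlim
  rw [integral_const_mul, add_zero, add_zero] at hftc
  rw [KAi_of_ne h, div_eq_iff (sub_ne_zero.2 h)]
  linarith

lemma ae_integral_eq_KAi (a : ℝ) (S : Set ℝ) :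
    (fun u ↦ ∫ s in Ioi (0 : ℝ), Ai (u + s) * Ai (a + s)) =ᵐ[volume.restrict S]
      fun u ↦ KAi u a := by
  refine ae_restrict_of_ae ?_
  filter_upwards [compl_mem_ae_iff.2 (measure_singleton a)] with u hu
  exact (KAi_eq_integral hu).symm

lemma intervalIntegrable_KAi (a b : ℝ) : IntervalIntegrable (fun u ↦ KAi u a) volume a b :=
  intervalIntegrable_iff.2 <|
    (hasExpDecay_Ai.integrable_shift_mul_shift hasExpDecay_Ai a b a).integral_prod_left.congr
      (ae_integral_eq_KAi a _)

lemma intervalIntegral_KAi (a b : ℝ) :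
    ∫ u in a..b, KAi u a = tailPairing Ai a a - tailPairing Ai a b := by
  rw [← hasExpDecay_Ai.intervalIntegral_integral_shift_mul_shift,
    intervalIntegral.integral_congr_ae_restrict (ae_integral_eq_KAi a _)]

lemma J1_eq_KAi_add (x y : ℝ) : J1 x y = KAi x y + 1 / 2 * Ai x * (1 - tailIntegral Ai y) := rfl

lemma deriv_J1 {x y : ℝ} (h : x ≠ y) :
    deriv (J1 x) y = (Ai x * (y * Ai y) - deriv Ai x * deriv Ai y) / (x - y)
      + KAi x y / (x - y) + 1 / 2 * Ai x * Ai y := by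
  have hnum := ((isAirySolution_Ai.hasDerivAt_deriv y).const_mul (Ai x)).sub
    ((isAirySolution_Ai.hasDerivAt y).const_mul (deriv Ai x))
  have hquot := hnum.div ((hasDerivAt_id y).const_sub x) (sub_ne_zero.2 h)
  have htail := ((hasExpDecay_Ai.hasDerivAt_tailIntegral y).const_sub 1).const_mul (1 / 2 * Ai x)
  have hJ1 : J1 x =ᶠ[𝓝 y] fun v ↦ (Ai x * deriv Ai v - deriv Ai x * Ai v) / (x - v)
      + 1 / 2 * Ai x * (1 - tailIntegral Ai v) := by
    filter_upwards [isOpen_ne.mem_nhds h.symm] with v hv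
    rw [J1_eq_KAi_add, KAi_of_ne (Ne.symm hv)]
  refine ((hquot.add htail).congr_of_eventuallyEq hJ1).deriv.trans ?_
  have := sub_ne_zero.2 h
  simp only [id, Pi.sub_apply, KAi_of_ne h]
  field_simp
  ring

lemma intervalIntegral_J1 (a b : ℝ) :
    ∫ u in a..b, J1 u a = 1 / 2 * (tailIntegral Ai a - tailIntegral Ai b
      + tailIntegral Ai a * tailIntegral Ai b) - tailPairing Ai a b := by
  have hAi := hasExpDecay_Ai.continuous
  simp_rw [J1_eq_KAi_add]
  rw [intervalIntegral.integral_add (intervalIntegrable_KAi a b)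
      (Continuous.intervalIntegrable (by fun_prop) _ _), intervalIntegral_KAi,
    intervalIntegral.integral_mul_const, intervalIntegral.integral_const_mul,
    hasExpDecay_Ai.intervalIntegral_eq_tailIntegral_sub, hasExpDecay_Ai.tailPairing_self]
  ring

lemma sign_isBigO_one {α : Type*} (f : α → ℝ) (l : Filter α) :
    (fun a ↦ Real.sign (f a)) =O[l] fun _ ↦ (1 : ℝ) := by
  refine isBigO_of_le _ fun a ↦ ?_
  rcases Real.sign_apply_eq (f a) with h | h | h <;> simp [h]

lemma intervalIntegral_J1_sub_sign_isBigO_one (x : ℝ) :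
    (fun y ↦ (∫ u in x..y, J1 u x) - 1 / 2 * Real.sign (y - x)) =O[⊤] fun _ ↦ (1 : ℝ) := by
  have htail := tailIntegral_Ai_isBigO_one
  simp only [intervalIntegral_J1]
  have hconst : (fun _ : ℝ ↦ tailIntegral Ai x) =O[⊤] fun _ ↦ (1 : ℝ) :=
    isBigO_const_const _ one_ne_zero _
  have hsum := (hconst.sub htail).add (htail.const_mul_left (tailIntegral Ai x))
  have hpair := hasExpDecay_Ai.tailPairing_isBigO_one htail x
  exact ((hsum.const_mul_left _).sub hpair).sub ((sign_isBigO_one _ _).const_mul_left _)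

lemma intervalIntegral_J1_sub_sign_swap_isBigO_one (x : ℝ) :
    (fun y ↦ (∫ u in y..x, J1 u y) - 1 / 2 * Real.sign (x - y)) =O[⊤] fun _ ↦ (1 : ℝ) := by
  have htail := tailIntegral_Ai_isBigO_one
  simp only [intervalIntegral_J1, mul_comm _ (tailIntegral Ai x)]
  have hconst : (fun _ : ℝ ↦ tailIntegral Ai x) =O[⊤] fun _ ↦ (1 : ℝ) :=
    isBigO_const_const _ one_ne_zero _
  have hsum := (htail.sub hconst).add (htail.const_mul_left (tailIntegral Ai x))
  have hpair := hasExpDecay_Ai.tailPairing_swap_isBigO_one htail x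
  exact ((hsum.const_mul_left _).sub hpair).sub ((sign_isBigO_one _ _).const_mul_left _)

/-! ### Decay of `L₁` -/

/-- The region in which `L₁(x, ·)` is estimated: it stays away both from `0` and from the
diagonal. -/
def farRegion (x : ℝ) : Set ℝ := {y | |x| + 1 ≤ |y|}

lemma exp_neg_isBigO_rpow {p : ℝ} (hp : -1 ≤ p) :
    (fun y ↦ Real.exp (-y)) =O[𝓟 (Ici 1)] fun y ↦ |y| ^ p := by
  refine isBigO_principal.2 ⟨1, fun y hy ↦ ?_⟩
  have hy0 : 0 < y := zero_lt_one.trans_le hy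
  rw [one_mul, Real.norm_of_nonneg (by positivity), Real.norm_of_nonneg (by positivity),
    abs_of_pos hy0]
  calc Real.exp (-y) = (Real.exp y)⁻¹ := Real.exp_neg y
    _ ≤ y⁻¹ := by gcongr; linarith [Real.add_one_le_exp y]
    _ = y ^ (-1 : ℝ) := (Real.rpow_neg_one y).symm
    _ ≤ y ^ p := Real.rpow_le_rpow_of_exponent_le hy hp

lemma HasExpDecay.isBigO_rpow_farRegion {f : ℝ → ℝ} (hf : HasExpDecay f) {p : ℝ} (hp : -1 ≤ p)
    (hleft : f =O[𝓟 (Iic (-1))] fun y ↦ |y| ^ p) (x : ℝ) :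
    f =O[𝓟 (farRegion x)] fun y ↦ |y| ^ p := by
  have hunion := hleft.sup ((hf.isBigO.mono le_top).trans (exp_neg_isBigO_rpow hp))
  rw [sup_principal] at hunion
  refine hunion.mono (principal_mono.2 fun y hy ↦ ?_)
  have hy1 : 1 ≤ |y| := (le_add_of_nonneg_left (abs_nonneg x)).trans hy
  exact (le_abs.1 hy1).symm.imp_left le_neg_of_le_neg

section FarRegion

variable {x : ℝ}

lemma abs_le_mul_abs_sub_of_mem_farRegion {y : ℝ} (hy : y ∈ farRegion x) :
    |y| ≤ (|x| + 1) * |x - y| := by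
  have hy : |x| + 1 ≤ |y| := hy
  have htri : |y| - |x| ≤ |x - y| := by rw [abs_sub_comm]; exact abs_sub_abs_le_abs_sub y x
  nlinarith [abs_nonneg x]

lemma ne_zero_of_mem_farRegion {y : ℝ} (hy : y ∈ farRegion x) : y ≠ 0 :=
  abs_pos.1 ((by positivity : 0 < |x| + 1).trans_le hy)

lemma ne_of_mem_farRegion {y : ℝ} (hy : y ∈ farRegion x) : x ≠ y := by
  rintro rfl
  exact (lt_add_one |x|).not_ge hy

lemma div_sub_isBigO {f r : ℝ → ℝ} (hf : f =O[𝓟 (farRegion x)] fun y ↦ y * r y) :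
    (fun y ↦ f y / (x - y)) =O[𝓟 (farRegion x)] r := by
  have hinv : (fun y ↦ (x - y)⁻¹) =O[𝓟 (farRegion x)] fun y ↦ y⁻¹ := by
    refine isBigO_principal.2 ⟨|x| + 1, fun y hy ↦ ?_⟩
    have hxy : 0 < |x - y| := abs_pos.2 (sub_ne_zero.2 (ne_of_mem_farRegion hy))
    have hy0 : 0 < |y| := abs_pos.2 (ne_zero_of_mem_farRegion hy)
    rw [norm_inv, norm_inv, Real.norm_eq_abs, Real.norm_eq_abs, ← div_eq_mul_inv,
      inv_le_iff_one_le_mul₀ hxy, div_mul_eq_mul_div, one_le_div hy0]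
    exact abs_le_mul_abs_sub_of_mem_farRegion hy
  exact (hf.mul hinv).congr' (.of_forall fun y ↦ (div_eq_mul_inv _ _).symm)
    (eventually_principal.2 fun y hy ↦ (div_eq_mul_inv _ _).symm.trans
      (mul_div_cancel_left₀ _ (ne_zero_of_mem_farRegion hy)))

lemma div_sub_rev_isBigO {f r : ℝ → ℝ} (hf : f =O[𝓟 (farRegion x)] fun y ↦ y * r y) :
    (fun y ↦ f y / (y - x)) =O[𝓟 (farRegion x)] r :=
  (div_sub_isBigO hf).neg_left.congr_left fun y ↦ by rw [← div_neg, neg_sub]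

lemma rpow_isBigO_rpow_farRegion {p q : ℝ} (hpq : p ≤ q) :
    (fun y : ℝ ↦ |y| ^ p) =O[𝓟 (farRegion x)] fun y ↦ |y| ^ q := by
  refine isBigO_principal.2 ⟨1, fun y hy ↦ ?_⟩
  have hy1 : 1 ≤ |y| := (le_add_of_nonneg_left (abs_nonneg x)).trans hy
  rw [one_mul, Real.norm_of_nonneg (by positivity), Real.norm_of_nonneg (by positivity)]
  exact Real.rpow_le_rpow_of_exponent_le hy1 hpq

lemma rpow_isBigO_mul_rpow {p q : ℝ} (hpq : p ≤ 1 + q) :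
    (fun y : ℝ ↦ |y| ^ p) =O[𝓟 (farRegion x)] fun y ↦ y * |y| ^ q := by
  refine ((rpow_isBigO_rpow_farRegion hpq).trans_eventuallyEq
    (eventually_principal.2 fun y hy ↦ ?_)).trans
    ((isBigO_refl (fun y : ℝ ↦ y) _).abs_left.mul (isBigO_refl _ _))
  simp only [Real.rpow_add (abs_pos.2 (ne_zero_of_mem_farRegion hy)), Real.rpow_one]

variable (x)

lemma Ai_isBigO : Ai =O[𝓟 (farRegion x)] fun y ↦ |y| ^ (-(1 : ℝ) / 4) :=
  hasExpDecay_Ai.isBigO_rpow_farRegion (by norm_num) isAirySolution_Ai.isBigO_rpow x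

lemma Ai_isBigO_mul : Ai =O[𝓟 (farRegion x)] fun y ↦ y * |y| ^ (-(1 : ℝ) / 4) :=
  (Ai_isBigO x).trans (rpow_isBigO_mul_rpow (by norm_num))

lemma deriv_Ai_isBigO_mul : deriv Ai =O[𝓟 (farRegion x)] fun y ↦ y * |y| ^ (-(1 : ℝ) / 4) :=
  (hasExpDecay_deriv_Ai.isBigO_rpow_farRegion (by norm_num) isAirySolution_Ai.deriv_isBigO_rpow
    x).trans (rpow_isBigO_mul_rpow (by norm_num))

lemma KAi_isBigO : KAi x =O[𝓟 (farRegion x)] fun y ↦ |y| ^ (-(1 : ℝ) / 4) :=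
  (div_sub_isBigO (((deriv_Ai_isBigO_mul x).const_mul_left _).sub
    ((Ai_isBigO_mul x).const_mul_left _))).congr'
    (eventually_principal.2 fun _ hy ↦ (KAi_of_ne (ne_of_mem_farRegion hy)).symm) .rfl

lemma KAi_isBigO_mul : KAi x =O[𝓟 (farRegion x)] fun y ↦ y * |y| ^ (-(1 : ℝ) / 4) :=
  (KAi_isBigO x).trans (rpow_isBigO_mul_rpow (by norm_num))

lemma J1_isBigO_one : J1 x =O[𝓟 (farRegion x)] fun _ ↦ (1 : ℝ) := by
  have hrpow : (fun y : ℝ ↦ |y| ^ (-(1 : ℝ) / 4)) =O[𝓟 (farRegion x)] fun _ ↦ (1 : ℝ) := by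
    simpa using rpow_isBigO_rpow_farRegion (x := x) (by norm_num : -(1 : ℝ) / 4 ≤ 0)
  exact ((KAi_isBigO x).trans hrpow).add (((isBigO_const_const _ one_ne_zero _).sub
    (tailIntegral_Ai_isBigO_one.mono le_top)).const_mul_left _)

lemma J1_swap_isBigO : (fun y ↦ J1 y x) =O[𝓟 (farRegion x)] fun y ↦ |y| ^ (-(1 : ℝ) / 4) := by
  refine ((KAi_isBigO x).add ((Ai_isBigO x).const_mul_left
    (1 / 2 * (1 - tailIntegral Ai x)))).congr_left fun y ↦ ?_
  rw [J1_eq_KAi_add, KAi_comm]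
  ring

lemma deriv_J1_isBigO :
    (fun y ↦ deriv (J1 x) y) =O[𝓟 (farRegion x)] fun y ↦ |y| ^ (-(1 : ℝ) / 4) := by
  have hdiag := div_sub_isBigO ((((isBigO_refl (fun y : ℝ ↦ y) _).mul (Ai_isBigO x)).const_mul_left
    (Ai x)).sub ((deriv_Ai_isBigO_mul x).const_mul_left (deriv Ai x)))
  have hKAi := div_sub_isBigO (KAi_isBigO_mul x)
  exact ((hdiag.add hKAi).add ((Ai_isBigO x).const_mul_left (1 / 2 * Ai x))).congr'
    (eventually_principal.2 fun y hy ↦ (deriv_J1 (ne_of_mem_farRegion hy)).symm) .rfl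

lemma deriv_J1_swap_isBigO :
    (fun y ↦ deriv (J1 y) x) =O[𝓟 (farRegion x)] fun y ↦ |y| ^ (-(1 : ℝ) / 4) := by
  have hdiag := div_sub_rev_isBigO (((Ai_isBigO_mul x).const_mul_left (x * Ai x)).sub
    ((deriv_Ai_isBigO_mul x).const_mul_left (deriv Ai x)))
  have hKAi := div_sub_rev_isBigO (KAi_isBigO_mul x)
  refine ((hdiag.add hKAi).add ((Ai_isBigO x).const_mul_left (1 / 2 * Ai x))).congr'
    (eventually_principal.2 fun y hy ↦ ?_) .rfl
  simp only [deriv_J1 (ne_of_mem_farRegion hy).symm, KAi_comm x y]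
  ring

lemma L1_isBigO : L1 x =O[𝓟 (farRegion x)] fun y ↦ |y| ^ (-(1 : ℝ) / 4) := by
  have hprod := (J1_isBigO_one x).mul (J1_swap_isBigO x)
  have hbracket := (deriv_J1_isBigO x).mul
    ((intervalIntegral_J1_sub_sign_isBigO_one x).mono le_top)
  simp only [one_mul, mul_one] at hprod hbracket
  exact hprod.sub hbracket

lemma L1_swap_isBigO :
    (fun y ↦ L1 y x) =O[𝓟 (farRegion x)] fun y ↦ |y| ^ (-(1 : ℝ) / 4) := by
  have hprod := (J1_swap_isBigO x).mul (J1_isBigO_one x)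
  have hbracket := (deriv_J1_swap_isBigO x).mul
    ((intervalIntegral_J1_sub_sign_swap_isBigO_one x).mono le_top)
  simp only [mul_one] at hprod hbracket
  exact hprod.sub hbracket

end FarRegion

/-- decay of the scalar part `L₁` of the quaternion product of Airy₁ kernels. -/
theorem L1_decay (x : ℝ) :
    ∃ C : ℝ, 0 < C ∧ ∀ y : ℝ, |x| + 1 ≤ |y| →
      |L1 x y| ≤ C * (|y| ^ (-(3:ℝ)/2) + |y| ^ (-(1:ℝ)/4)) ∧
      |L1 y x| ≤ C * (|y| ^ (-(3:ℝ)/2) + |y| ^ (-(1:ℝ)/4)) := by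
  obtain ⟨C, hC, hbound⟩ := ((L1_isBigO x).prod_left (L1_swap_isBigO x)).exists_pos
  rw [isBigOWith_principal] at hbound
  refine ⟨C, hC, fun y hy ↦ norm_prod_le_iff.1 ((hbound y hy).trans ?_)⟩
  rw [Real.norm_of_nonneg (by positivity)]
  gcongr
  exact le_add_of_nonneg_left (by positivity)
end

section
/- For every even integer n ≥ 2 and all x, y ∈ ℝ: (i) ∂₂J₁ⁿ(x,y) = −∂₂J₁ⁿ(y,x), where ∂₂J₁ⁿ denotes the derivative of J₁ⁿ in its second variable; (ii) ∫_y^x J₁ⁿ(u,y) du = −∫_x^y J₁ⁿ(u,x) du. -/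
open MeasureTheory Filter Set

/-!
The kernel `J₁ⁿ` is of finite rank: by the Christoffel–Darboux formula
`K_Aiⁿ(x, y) = n^{-1/3} ∑_{k<n} ψ_kⁿ(x) ψ_kⁿ(y)`. The ladder relation expressing `(ψ_kⁿ)'` by
`ψ_{k-1}ⁿ` and `ψ_{k+1}ⁿ` makes `(∂₁ + ∂₂) K_Aiⁿ` telescope to
`-(1/2)(ψ_nⁿ(x) ψ_{n-1}ⁿ(y) + ψ_{n-1}ⁿ(x) ψ_nⁿ(y))`, which the correction
`(1/2) ψ_{n-1}ⁿ(x) (εψ_n)(y)` cancels, since `(εψ_n)' = ψ_n`. Hence `∂₂J₁ⁿ` is antisymmetric.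
Its integral over a square `[y, x]²` is therefore zero; integrating in the second variable first,
this is the antisymmetry of `∫_y^x J₁ⁿ(u, y) du`.
-/

-- The coefficient of `p (k - 1)` vanishes at `k = 0`, so its truncated index there is immaterial.
section Telescoping

variable {R : Type*} [CommRing R] {α β p q p' q' : ℕ → R} {s t : R}

theorem christoffel_darboux (hβ : β 0 = 0)
    (hp : ∀ k, s * p k = β (k + 1) * p (k + 1) + α k * p k + β k * p (k - 1))
    (hq : ∀ k, t * q k = β (k + 1) * q (k + 1) + α k * q k + β k * q (k - 1)) (n : ℕ) :
    (s - t) * ∑ k ∈ Finset.range n, p k * q k =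
      β n * (p n * q (n - 1) - p (n - 1) * q n) := by
  induction n with
  | zero => simp [hβ]
  | succ n ih =>
    rw [Finset.sum_range_succ, mul_add, ih, Nat.add_sub_cancel]
    linear_combination q n * hp n - p n * hq n

theorem sum_leibniz_of_ladder (hβ : β 0 = 0)
    (hp : ∀ k, p' k = β k * p (k - 1) - β (k + 1) * p (k + 1))
    (hq : ∀ k, q' k = β k * q (k - 1) - β (k + 1) * q (k + 1)) (n : ℕ) :
    ∑ k ∈ Finset.range n, (p k * q' k + q k * p' k) =
      -(β n * (p n * q (n - 1) + p (n - 1) * q n)) := by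
  induction n with
  | zero => simp [hβ]
  | succ n ih =>
    rw [Finset.sum_range_succ, ih, Nat.add_sub_cancel]
    linear_combination q n * hp n + p n * hq n

end Telescoping

section Oscillator

open Polynomial in
theorem integrable_exp_neg_mul_sq_mul_aeval {R : Type*} [CommSemiring R] [Algebra R ℝ] {b : ℝ}
    (hb : 0 < b) (p : R[X]) : Integrable fun x : ℝ => Real.exp (-b * x ^ 2) * aeval x p := by
  have hmonomial (j : ℕ) : Integrable fun x : ℝ => x ^ j * Real.exp (-b * x ^ 2) := by
    simpa only [Real.rpow_natCast] using integrable_rpow_mul_exp_neg_mul_sq hb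
      (neg_one_lt_zero.trans_le j.cast_nonneg)
  induction p using Polynomial.induction_on' with
  | add p q hp hq =>
    simp only [map_add, mul_add]
    exact hp.add hq
  | monomial j a =>
    refine ((hmonomial j).const_mul (algebraMap R ℝ a)).congr (.of_forall fun x => ?_)
    simp only [aeval_monomial]
    ring

open Polynomial in
theorem derivative_hermite (k : ℕ) :
    derivative (hermite k) = (k : ℤ[X]) * hermite (k - 1) := by
  induction k with
  | zero => simp
  | succ k ih =>
    have ih' := congrArg derivative ih
    rw [derivative_mul, derivative_natCast, zero_mul, zero_add] at ih'
    rw [hermite_succ, derivative_sub, derivative_mul, derivative_X, ih', ih, Nat.add_sub_cancel]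
    cases k with
    | zero => simp
    | succ k =>
      rw [hermite_succ k, Nat.add_sub_cancel]
      push_cast
      ring

theorem hermiteP_eq_aeval_hermite (k : ℕ) (s : ℝ) :
    hermiteP k s = Polynomial.aeval s (Polynomial.hermite k) := by
  simp only [hermiteP, Polynomial.hermite_eq_deriv_gaussian', iteratedDeriv_eq_iterate, neg_div]
  ring

/-- The normalizing constant `(2π)^{-1/4} (k!)^{-1/2}` of the oscillator function `φ_k`. -/
noncomputable def oscNorm (k : ℕ) : ℝ :=
  (2 * Real.pi) ^ (-(1 : ℝ) / 4) * (k.factorial : ℝ) ^ (-(1 : ℝ) / 2)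

theorem sqrt_succ_mul_oscNorm_succ (k : ℕ) :
    √((k + 1 : ℕ) : ℝ) * oscNorm (k + 1) = oscNorm k := by
  have hpos : (0 : ℝ) < (k + 1 : ℕ) := by positivity
  have hcancel : √((k + 1 : ℕ) : ℝ) * ((k + 1 : ℕ) : ℝ) ^ (-(1 : ℝ) / 2) = 1 := by
    rw [Real.sqrt_eq_rpow, ← Real.rpow_add hpos]
    norm_num
  rw [oscNorm, oscNorm, Nat.factorial_succ, Nat.cast_mul, Real.mul_rpow hpos.le (by positivity)]
  linear_combination (2 * Real.pi) ^ (-(1 : ℝ) / 4) * (k.factorial : ℝ) ^ (-(1 : ℝ) / 2) * hcancel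

theorem natCast_mul_oscNorm (k : ℕ) : k * oscNorm k = √k * oscNorm (k - 1) := by
  cases k with
  | zero => simp
  | succ k =>
    rw [Nat.add_sub_cancel, ← sqrt_succ_mul_oscNorm_succ k, ← mul_assoc,
      Real.mul_self_sqrt (Nat.cast_nonneg _)]

theorem osc_eq_hermite (k : ℕ) (s : ℝ) :
    osc k s =
      oscNorm k * (Real.exp (-s ^ 2 / 4) * Polynomial.aeval s (Polynomial.hermite k)) := by
  rw [osc, hermiteP_eq_aeval_hermite, oscNorm]
  ring

theorem osc_three_term (k : ℕ) (s : ℝ) :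
    s * osc k s = √(k + 1 : ℕ) * osc (k + 1) s + √k * osc (k - 1) s := by
  have hnorm := sqrt_succ_mul_oscNorm_succ k
  have hnorm' := natCast_mul_oscNorm k
  simp only [osc_eq_hermite, Polynomial.hermite_succ, derivative_hermite, map_sub, map_mul,
    Polynomial.aeval_X, map_natCast]
  set E := Real.exp (-s ^ 2 / 4)
  set H := Polynomial.aeval s (Polynomial.hermite k)
  set H' := Polynomial.aeval s (Polynomial.hermite (k - 1))
  linear_combination (E * k * H' - E * s * H) * hnorm + E * H' * hnorm'

theorem hasDerivAt_osc (k : ℕ) (s : ℝ) :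
    HasDerivAt (osc k) (√k * osc (k - 1) s - s / 2 * osc k s) s := by
  have hexp : HasDerivAt (fun s : ℝ => Real.exp (-s ^ 2 / 4))
      (Real.exp (-s ^ 2 / 4) * (-(2 * s) / 4)) s := by
    simpa using (((hasDerivAt_pow 2 s).neg).div_const 4).exp
  have hprod := (hexp.mul (Polynomial.hasDerivAt_aeval (Polynomial.hermite k) s)).const_mul
    (oscNorm k)
  rw [funext (osc_eq_hermite k)]
  refine hprod.congr_deriv ?_
  simp only [osc_eq_hermite, derivative_hermite, map_mul, map_natCast]
  linear_combination Real.exp (-s ^ 2 / 4) *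
    Polynomial.aeval s (Polynomial.hermite (k - 1)) * natCast_mul_oscNorm k

theorem integrable_osc (k : ℕ) : Integrable (osc k) := by
  refine ((integrable_exp_neg_mul_sq_mul_aeval (b := 1 / 4) (by norm_num)
    (Polynomial.hermite k)).const_mul (oscNorm k)).congr (.of_forall fun s => ?_)
  rw [osc_eq_hermite]
  ring_nf

end Oscillator

section SoftEdge

/-- The width `n^{-1/6}` of the soft-edge scaling. -/
noncomputable def edgeScale (n : ℕ) : ℝ := (n : ℝ) ^ (-(1 : ℝ) / 6)

theorem sqrt_mul_edgeScale_pow_three {n : ℕ} (hn : n ≠ 0) : √n * edgeScale n ^ 3 = 1 := by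
  have hpos : (0 : ℝ) < n := by positivity
  rw [edgeScale, Real.sqrt_eq_rpow, ← Real.rpow_mul_natCast hpos.le, ← Real.rpow_add hpos]
  norm_num

theorem inv_two_mul_rpow_eq_edgeScale (n : ℕ) :
    1 / (2 * (n : ℝ) ^ ((1 : ℝ) / 3)) = edgeScale n ^ 2 / 2 := by
  have hsq : edgeScale n ^ 2 = ((n : ℝ) ^ ((1 : ℝ) / 3))⁻¹ := by
    rw [edgeScale, ← Real.rpow_mul_natCast n.cast_nonneg, ← Real.rpow_neg n.cast_nonneg]
    norm_num
  rw [hsq]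
  ring

variable (n k : ℕ) (x : ℝ)

theorem psiUp_eq_osc :
    psiUp n k x = (n : ℝ) ^ ((1 : ℝ) / 12) * osc k (2 * √n + edgeScale n * x) := rfl

theorem psiUp_three_term :
    edgeScale n * x * psiUp n k x =
      √(k + 1 : ℕ) * psiUp n (k + 1) x + -(2 * √n) * psiUp n k x + √k * psiUp n (k - 1) x := by
  simp only [psiUp_eq_osc]
  linear_combination (n : ℝ) ^ ((1 : ℝ) / 12) * osc_three_term k (2 * √n + edgeScale n * x)

theorem hasDerivAt_psiUp :
    HasDerivAt (psiUp n k)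
      (edgeScale n *
        (√k * psiUp n (k - 1) x - (2 * √n + edgeScale n * x) / 2 * psiUp n k x)) x := by
  have haffine : HasDerivAt (fun x => 2 * √n + edgeScale n * x) (edgeScale n) x := by
    simpa using ((hasDerivAt_id x).const_mul (edgeScale n)).const_add (2 * √n)
  refine (((hasDerivAt_osc k (2 * √n + edgeScale n * x)).comp x haffine).const_mul
    ((n : ℝ) ^ ((1 : ℝ) / 12))).congr_deriv ?_
  simp only [psiUp_eq_osc]
  ring

theorem differentiable_psiUp : Differentiable ℝ (psiUp n k) :=
  fun x => (hasDerivAt_psiUp n k x).differentiableAt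

@[fun_prop]
theorem continuous_psiUp : Continuous (psiUp n k) :=
  (differentiable_psiUp n k).continuous

theorem deriv_psiUp_ladder :
    deriv (psiUp n k) x =
      edgeScale n / 2 * √k * psiUp n (k - 1) x
        - edgeScale n / 2 * √(k + 1 : ℕ) * psiUp n (k + 1) x := by
  rw [(hasDerivAt_psiUp n k x).deriv]
  linear_combination -(edgeScale n / 2) * psiUp_three_term n k x

@[fun_prop]
theorem continuous_deriv_psiUp : Continuous (deriv (psiUp n k)) := by
  rw [funext (deriv_psiUp_ladder n k)]
  fun_prop

theorem integrable_psiUp (hn : n ≠ 0) : Integrable (psiUp n k) := by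
  have hscale : (n : ℝ) ^ (-(1 : ℝ) / 6) ≠ 0 := by positivity
  exact (((integrable_osc k).comp_add_left (2 * √n)).comp_mul_left' hscale).const_mul
    ((n : ℝ) ^ ((1 : ℝ) / 12))

end SoftEdge

section FiniteRank

variable (n : ℕ) (x y : ℝ)

theorem psiUp_christoffel_darboux :
    edgeScale n * (x - y) * ∑ k ∈ Finset.range n, psiUp n k x * psiUp n k y =
      √n * (psiUp n n x * psiUp n (n - 1) y - psiUp n (n - 1) x * psiUp n n y) := by
  rw [mul_sub]
  exact christoffel_darboux (β := fun k => √k) (by simp) (fun k => psiUp_three_term n k x)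
    (fun k => psiUp_three_term n k y) n

-- This is the derivative in the first variable, at `y = x`, of `psiUp_christoffel_darboux`.
theorem psiUp_christoffel_darboux_self :
    edgeScale n * ∑ k ∈ Finset.range n, psiUp n k x * psiUp n k x =
      √n * (deriv (psiUp n n) x * psiUp n (n - 1) x
        - deriv (psiUp n (n - 1)) x * psiUp n n x) := by
  have hψ (k : ℕ) := (differentiable_psiUp n k x).hasDerivAt
  have hleft := (((hasDerivAt_id x).sub_const x).const_mul (edgeScale n)).mul
    (HasDerivAt.fun_sum fun k (_ : k ∈ Finset.range n) => (hψ k).mul_const (psiUp n k x))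
  have hright := (((hψ n).mul_const (psiUp n (n - 1) x)).sub
    ((hψ (n - 1)).mul_const (psiUp n n x))).const_mul √n
  simpa using hleft.unique
    (hright.congr_of_eventuallyEq (.of_forall fun u => psiUp_christoffel_darboux n u x))

theorem KAiN_self :
    KAiN n x x = edgeScale n * √n * (deriv (psiUp n n) x * psiUp n (n - 1) x
      - deriv (psiUp n (n - 1)) x * psiUp n n x) := by
  have hderiv := funext fun u => (hasDerivAt_psiUp n n u).deriv
  have hderiv₂ : deriv (deriv (psiUp n n)) x = edgeScale n * (√n * deriv (psiUp n (n - 1)) x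
      - (edgeScale n / 2 * psiUp n n x
        + (2 * √n + edgeScale n * x) / 2 * deriv (psiUp n n) x)) := by
    have hψ (k : ℕ) := (differentiable_psiUp n k x).hasDerivAt
    have haffine : HasDerivAt (fun u => (2 * √n + edgeScale n * u) / 2) (edgeScale n / 2) x := by
      simpa using
        (((hasDerivAt_id x).const_mul (edgeScale n)).const_add (2 * √n)).div_const 2
    conv_lhs => rw [hderiv]
    exact ((((hψ (n - 1)).const_mul √n).sub (haffine.mul (hψ n))).const_mul _).deriv
  rw [KAiN, if_pos rfl, inv_two_mul_rpow_eq_edgeScale, psiN, hderiv₂]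
  linear_combination deriv (psiUp n n) x * congrFun hderiv x

theorem KAiN_of_ne (hxy : x ≠ y) :
    KAiN n x y = edgeScale n * √n *
      (psiUp n n x * psiUp n (n - 1) y - psiUp n (n - 1) x * psiUp n n y) / (x - y) := by
  have hsub : x - y ≠ 0 := sub_ne_zero.mpr hxy
  rw [KAiN, if_neg hxy, inv_two_mul_rpow_eq_edgeScale, psiN, (hasDerivAt_psiUp n n x).deriv,
    (hasDerivAt_psiUp n n y).deriv]
  field_simp
  ring

theorem KAiN_eq_sum :
    KAiN n x y = edgeScale n ^ 2 * ∑ k ∈ Finset.range n, psiUp n k x * psiUp n k y := by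
  obtain rfl | hxy := eq_or_ne x y
  · rw [KAiN_self]
    linear_combination -edgeScale n * psiUp_christoffel_darboux_self n x
  · rw [KAiN_of_ne n x y hxy, div_eq_iff (sub_ne_zero.mpr hxy)]
    linear_combination -edgeScale n * psiUp_christoffel_darboux n x y

end FiniteRank

section Epsilon

variable {f : ℝ → ℝ}

theorem epsF_eq_integral_Iic_sub (hf : Integrable f) (x : ℝ) :
    epsF f x = (∫ y in Iic x, f y) - (1 / 2) * ∫ y, f y := by
  have hsign : (fun y => Real.sign (x - y) * f y) =ᵐ[volume]
      fun y => 2 * (Iic x).indicator f y - f y := by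
    filter_upwards [Measure.ae_ne volume x] with y hy
    obtain hlt | hgt := hy.lt_or_gt
    · rw [Real.sign_of_pos (sub_pos.mpr hlt), indicator_of_mem (mem_Iic.mpr hlt.le)]
      ring
    · rw [Real.sign_of_neg (sub_neg.mpr hgt), indicator_of_notMem (notMem_Iic.mpr hgt)]
      ring
  rw [epsF, integral_congr_ae hsign,
    integral_sub ((hf.indicator measurableSet_Iic).const_mul 2) hf, integral_const_mul,
    integral_indicator measurableSet_Iic]
  ring

theorem hasDerivAt_epsF (hf : Integrable f) {x : ℝ} (hx : ContinuousAt f x) :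
    HasDerivAt (epsF f) (f x) x := by
  have heq : epsF f = fun u => (∫ y in x..u, f y) + (∫ y in Iic x, f y) - (1 / 2) * ∫ y, f y := by
    funext u
    rw [epsF_eq_integral_Iic_sub hf,
      ← intervalIntegral.integral_Iic_sub_Iic hf.integrableOn hf.integrableOn, sub_add_cancel]
  rw [heq]
  exact ((intervalIntegral.integral_hasDerivAt_right .refl
    hf.aestronglyMeasurable.stronglyMeasurableAtFilter hx).add_const _).sub_const _

end Epsilon

section Antisymmetry

open intervalIntegral in
theorem integral_eq_neg_integral_of_antisymm_deriv {E : Type*} [NormedAddCommGroup E]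
    [NormedSpace ℝ E] [CompleteSpace E] {J D : ℝ → ℝ → E} (hJ : ∀ v, Continuous fun u => J u v)
    (hJD : ∀ u v, HasDerivAt (J u) (D u v) v) (hD : Continuous (Function.uncurry D))
    (hanti : ∀ u v, D u v = -D v u) (x y : ℝ) :
    ∫ u in y..x, J u y = -∫ u in x..y, J u x := by
  have hsquare : ∫ u in y..x, ∫ v in y..x, D u v = 0 := by
    have : IsAddTorsionFree E := .of_isTorsionFree ℝ E
    refine self_eq_neg.mp ?_
    calc ∫ u in y..x, ∫ v in y..x, D u v
        = ∫ v in y..x, ∫ u in y..x, D u v :=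
          intervalIntegral_intervalIntegral_swap
            ((hD.continuousOn.integrableOn_compact (isCompact_uIcc.prod isCompact_uIcc)).mono_set
              (prod_mono uIoc_subset_uIcc uIoc_subset_uIcc))
      _ = -∫ v in y..x, ∫ u in y..x, D v u := by
          simp only [← intervalIntegral.integral_neg, ← hanti]
  have hftc (u : ℝ) : ∫ v in y..x, D u v = J u x - J u y :=
    integral_eq_sub_of_hasDerivAt (fun v _ => hJD u v)
      ((hD.comp (by fun_prop : Continuous fun v => (u, v))).intervalIntegrable _ _)
  simp only [hftc] at hsquare
  rw [integral_sub ((hJ x).intervalIntegrable _ _) ((hJ y).intervalIntegrable _ _),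
    sub_eq_zero] at hsquare
  rw [← hsquare, integral_symm]

variable (n : ℕ)

/-- The closed form of `∂₂J₁ⁿ(x, y)`, the finite-rank form of `K_Aiⁿ` and `(εψ_n)' = ψ_n` being
inserted. -/
noncomputable def derivJ1N (x y : ℝ) : ℝ :=
  edgeScale n ^ 2 * ∑ k ∈ Finset.range n, psiUp n k x * deriv (psiUp n k) y
    + (1 / 2) * psiUp n (n - 1) x * psiUp n n y

theorem J1N_eq_sum (x y : ℝ) :
    J1N n x y = edgeScale n ^ 2 * ∑ k ∈ Finset.range n, psiUp n k x * psiUp n k y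
      + (1 / 2) * psiUp n (n - 1) x * epsPsi n y := by
  rw [J1N, KAiN_eq_sum]

theorem continuous_J1N_left (y : ℝ) : Continuous fun x => J1N n x y := by
  simp only [J1N_eq_sum]
  fun_prop

theorem continuous_derivJ1N : Continuous (Function.uncurry (derivJ1N n)) := by
  simp only [Function.uncurry_def, derivJ1N]
  fun_prop

variable {n}

theorem hasDerivAt_J1N (hn : n ≠ 0) (x y : ℝ) : HasDerivAt (J1N n x) (derivJ1N n x y) y := by
  rw [funext (J1N_eq_sum n x)]
  refine .add (.const_mul _ (.fun_sum fun k _ => .const_mul _ ?_)) (.const_mul _ ?_)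
  · exact (differentiable_psiUp n k y).hasDerivAt
  · exact hasDerivAt_epsF (integrable_psiUp n n hn) (continuous_psiUp n n).continuousAt

theorem derivJ1N_antisymm (hn : n ≠ 0) (x y : ℝ) : derivJ1N n x y = -derivJ1N n y x := by
  have hsum := sum_leibniz_of_ladder (β := fun k => edgeScale n / 2 * √k) (by simp)
    (p := fun k => psiUp n k x) (q := fun k => psiUp n k y)
    (fun k => deriv_psiUp_ladder n k x) (fun k => deriv_psiUp_ladder n k y) n
  rw [Finset.sum_add_distrib] at hsum
  simp only [derivJ1N]
  linear_combination edgeScale n ^ 2 * hsum - (1 / 2) * (psiUp n n x * psiUp n (n - 1) y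
    + psiUp n (n - 1) x * psiUp n n y) * sqrt_mul_edgeScale_pow_three hn

end Antisymmetry

theorem J1N_antisymmetry_general (n : ℕ) (hn : n ≠ 0) (x y : ℝ) :
    deriv (fun v => J1N n x v) y = -deriv (fun v => J1N n y v) x ∧
    (∫ u in y..x, J1N n u y) = -∫ u in x..y, J1N n u x := by
  constructor
  · rw [(hasDerivAt_J1N hn x y).deriv, (hasDerivAt_J1N hn y x).deriv]
    exact derivJ1N_antisymm hn x y
  · exact integral_eq_neg_integral_of_antisymm_deriv (continuous_J1N_left n) (hasDerivAt_J1N hn)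
      (continuous_derivJ1N n) (derivJ1N_antisymm hn) x y

/-- antisymmetry relations for the finite-`n` kernel `J₁ⁿ` (`n` even). -/
theorem J1N_antisymmetry (n : ℕ) (hn : 2 ≤ n) (hev : Even n) (x y : ℝ) :
    deriv (fun v => J1N n x v) y = - deriv (fun v => J1N n y v) x ∧
    (∫ u in y..x, J1N n u y) = - ∫ u in x..y, J1N n u x :=
  J1N_antisymmetry_general n (by lia) x y
end
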